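/- The second player, Green, has a winning strategy in Sim⁺, the avoidance⁺ variant of Sim in which at each move the player to move colors a nonempty set of one or more so-far uncolored edges in his own color (with the creation of a triangle all of whose edges have the mover's color still forbidden), and the first player unable to make a legal move loses. -/

import Mathlib

/-- The 15 edges of the complete graph `K_6`: unordered pairs of distinct vertices. -/
abbrev Edge6 := {e : Sym2 (Fin 6) // ¬ e.IsDiag}

/-- The edge of `K_6` joining two distinct vertices. -/
def mkEdge6 (a b : Fin 6) (h : a ≠ b) : Edge6 :=
  ⟨s(a, b), by simpa using h⟩

/-- A Sim⁺ position: a partial coloring of the edges of `K_6`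
(`none` = uncolored, `some true` = Red, `some false` = Green). -/
abbrev Pos := Edge6 → Option Bool

/-- The initial position: all edges uncolored. -/
def startPos : Pos := fun _ => none

/-- Coloring all edges of the set `s` in color `c`. -/
def colorSet (p : Pos) (c : Bool) (s : Finset Edge6) : Pos :=
  fun e => if e ∈ s then some c else p e

/-- Position `p` contains a triangle all three of whose edges have color `c`. -/
def HasMonoTri (p : Pos) (c : Bool) : Prop :=
  ∃ a b d : Fin 6, ∃ hab : a ≠ b, ∃ had : a ≠ d, ∃ hbd : b ≠ d,
    p (mkEdge6 a b hab) = some c ∧ p (mkEdge6 a d had) = some c ∧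
      p (mkEdge6 b d hbd) = some c

/-- A legal Sim⁺ move for player `c` at position `p`: color a nonempty set of so-far
uncolored edges in one's own color, but the resulting position may not contain a
monochromatic triangle in one's own color. -/
def Legal (p : Pos) (c : Bool) (s : Finset Edge6) : Prop :=
  s.Nonempty ∧ (∀ e ∈ s, p e = none) ∧ ¬ HasMonoTri (colorSet p c s) c

/-- The player making the `k`-th move (moves are numbered from 0):
Red (`true`) moves first and the players alternate. -/
def playerAt (k : ℕ) : Bool := decide (k % 2 = 0)

/-- The position reached from `p` after the list of moves `ms` (each move a set of
edges), the first element of `ms` being made by the player moving at step `k`. -/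
def posFrom (p : Pos) (k : ℕ) : List (Finset Edge6) → Pos
  | [] => p
  | s :: ms => posFrom (colorSet p (playerAt k) s) (k + 1) ms

/-- The position reached from the empty board after the list of moves `ms`. -/
def posAfter (ms : List (Finset Edge6)) : Pos := posFrom startPos 0 ms

/-- A play (list of moves, alternately by Red and Green, Red first) in which Green
follows the strategy `σ`: every move is legal for the player making it, and every move
of Green is the one prescribed by `σ` at the current position. -/
def FollowsGreen (σ : Pos → Finset Edge6) (ms : List (Finset Edge6)) : Prop :=
  ∀ i, ∀ h : i < ms.length,
    Legal (posAfter (ms.take i)) (playerAt i) (ms.get ⟨i, h⟩) ∧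
    (playerAt i = false → ms.get ⟨i, h⟩ = σ (posAfter (ms.take i)))

/-!
A complete bipartite graph is triangle-free. So once Green's edges lie in a cut `K` of `K_6`, she
may take the free edges of `K` one at a time without ever completing a triangle, and she holds out
as long as, however Red continues, the edges he gains are no more numerous than the edges of `K`
still free. As he must avoid triangles too, Red soon runs short of edges: except in a few
dozen positions, up to permutations of the vertices, Green can seize part of a cut and win this
tempo count at once. In those positions she makes a prepared move from an opening book. That the
cuts and the book together answer every move of Red is a finite check.
-/

namespace SimPlus

open Finset

local notation a:76 "—" b:76 => mkEdge6 a b (by decide)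

/-! ### The avoidance⁺ game -/

section AvoidanceGame

variable {E : Type*} {Safe : Finset E → Prop}

/-- A move of the avoidance⁺ game with safe sets `Safe`: a player owning `A`, whose opponent
owns `B`, enlarges his set to `A'`. -/
def IsMove (Safe : Finset E → Prop) (A B A' : Finset E) : Prop :=
  A ⊂ A' ∧ Disjoint A' B ∧ Safe A'

theorem isMove_union_iff [DecidableEq E] {A B s : Finset E} (hAB : Disjoint A B)
    (hAs : Disjoint A s) :
    IsMove Safe A B (A ∪ s) ↔ s.Nonempty ∧ Disjoint s B ∧ Safe (A ∪ s) := by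
  have hssub : A ⊂ A ∪ s ↔ s.Nonempty := by
    rw [← sup_eq_union, left_lt_sup, nonempty_iff_ne_empty, not_iff_not]
    exact ⟨hAs.symm.eq_bot_of_le, fun h ↦ h ▸ empty_subset A⟩
  rw [IsMove, hssub, disjoint_union_left, and_iff_right hAB]

theorem isMove_union_toFinset [DecidableEq E] {A B : Finset E} {l : List E} (hne : l ≠ [])
    (hfree : ∀ e ∈ l, e ∉ B ∧ e ∉ A) (hAB : Disjoint A B) (hsafe : Safe (A ∪ l.toFinset)) :
    IsMove Safe A B (A ∪ l.toFinset) :=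
  have hfree' : ∀ e ∈ l.toFinset, e ∉ B ∧ e ∉ A := fun e he ↦ hfree e (List.mem_toFinset.1 he)
  (isMove_union_iff hAB <| disjoint_right.2 fun e he ↦ (hfree' e he).2).2
    ⟨(List.toFinset_nonempty_iff l).2 hne, disjoint_left.2 fun e he ↦ (hfree' e he).1, hsafe⟩

/-- Green can answer forever when Red, owning `R`, is to move and Green owns `G`. Encoded as a
greatest fixed point: the position lies in a family `W` of positions that Green can re-enter
after every move of Red. -/
def GreenHolds (Safe : Finset E → Prop) (R G : Finset E) : Prop :=
  ∃ W : Finset E → Finset E → Prop, W R G ∧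
    ∀ R G, W R G → ∀ X, IsMove Safe R G X → ∃ Y, IsMove Safe G X Y ∧ W X Y

/-- Green, to move and owning `G` against Red's `X`, has a move after which she can answer
forever. -/
def GreenSurvives (Safe : Finset E → Prop) (X G : Finset E) : Prop :=
  ∃ Y, IsMove Safe G X Y ∧ GreenHolds Safe X Y

theorem GreenHolds.survives {R G X : Finset E} (h : GreenHolds Safe R G)
    (hX : IsMove Safe R G X) : GreenSurvives Safe X G := by
  obtain ⟨W, hRG, hW⟩ := h
  obtain ⟨Y, hY, hXY⟩ := hW R G hRG X hX
  exact ⟨Y, hY, W, hXY, hW⟩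

theorem GreenHolds.of_forall_survives {R G : Finset E}
    (h : ∀ X, IsMove Safe R G X → GreenSurvives Safe X G) : GreenHolds Safe R G := by
  refine ⟨fun R' G' ↦ (R' = R ∧ G' = G) ∨ GreenHolds Safe R' G', .inl ⟨rfl, rfl⟩, ?_⟩
  rintro R' G' hRG X hX
  obtain ⟨Y, hY, hXY⟩ : GreenSurvives Safe X G' := by
    rcases hRG with ⟨rfl, rfl⟩ | hRG
    exacts [h X hX, hRG.survives hX]
  exact ⟨Y, hY, .inr hXY⟩

theorem IsMove.map {σ : Equiv.Perm E} (hσ : ∀ s, Safe (σ.finsetCongr s) ↔ Safe s)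
    {A B A' : Finset E} (h : IsMove Safe A B A') :
    IsMove Safe (σ.finsetCongr A) (σ.finsetCongr B) (σ.finsetCongr A') :=
  ⟨Finset.map_ssubset_map.2 h.1, (Finset.disjoint_map _).2 h.2.1, (hσ A').2 h.2.2⟩

theorem safe_finsetCongr_symm {σ : Equiv.Perm E} (hσ : ∀ s, Safe (σ.finsetCongr s) ↔ Safe s)
    (s : Finset E) : Safe (σ.symm.finsetCongr s) ↔ Safe s := by
  rw [← hσ, ← Equiv.finsetCongr_symm, Equiv.apply_symm_apply]

theorem GreenHolds.map {σ : Equiv.Perm E} (hσ : ∀ s, Safe (σ.finsetCongr s) ↔ Safe s)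
    {R G : Finset E} (h : GreenHolds Safe R G) :
    GreenHolds Safe (σ.finsetCongr R) (σ.finsetCongr G) := by
  obtain ⟨W, hRG, hW⟩ := h
  refine ⟨fun R G ↦ W (σ.symm.finsetCongr R) (σ.symm.finsetCongr G), ?_, fun R G hRG X hX ↦ ?_⟩
  · simpa only [← Equiv.finsetCongr_symm, Equiv.symm_apply_apply] using hRG
  · obtain ⟨Y, hY, hXY⟩ := hW _ _ hRG _ (hX.map (safe_finsetCongr_symm hσ))
    refine ⟨σ.finsetCongr Y, ?_, ?_⟩
    · simpa only [← Equiv.finsetCongr_symm, Equiv.apply_symm_apply] using hY.map hσ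
    · simpa only [← Equiv.finsetCongr_symm, Equiv.symm_apply_apply] using hXY

theorem GreenSurvives.of_map {σ : Equiv.Perm E} (hσ : ∀ s, Safe (σ.finsetCongr s) ↔ Safe s)
    {X G : Finset E} (h : GreenSurvives Safe (σ.finsetCongr X) (σ.finsetCongr G)) :
    GreenSurvives Safe X G := by
  obtain ⟨Y, hY, hXY⟩ := h
  have hsymm := safe_finsetCongr_symm hσ
  refine ⟨σ.symm.finsetCongr Y, ?_, ?_⟩
  · simpa only [← Equiv.finsetCongr_symm, Equiv.symm_apply_apply] using hY.map hsymm
  · simpa only [← Equiv.finsetCongr_symm, Equiv.symm_apply_apply] using hXY.map hsymm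

-- Green spends her reserve `K \ (G ∪ R)` one edge per turn, while every edge Red takes counts
-- against him, so the inequality survives each exchange of moves.
theorem GreenHolds.of_forall_card_le [DecidableEq E] (hSafe : Antitone Safe) {K R G : Finset E}
    (hK : Safe K) (hGK : G ⊆ K)
    (h : ∀ Z, R ⊆ Z → Disjoint Z G → Safe Z → #(Z \ R) ≤ #(K \ (G ∪ Z))) :
    GreenHolds Safe R G := by
  refine ⟨fun R G ↦ G ⊆ K ∧ ∀ Z, R ⊆ Z → Disjoint Z G → Safe Z → #(Z \ R) ≤ #(K \ (G ∪ Z)),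
    ⟨hGK, h⟩, ?_⟩
  rintro R G ⟨hGK, h⟩ X ⟨hRX, hXG, hX⟩
  obtain ⟨e, he⟩ : (K \ (G ∪ X)).Nonempty :=
    card_pos.1 <| (card_pos.2 <| sdiff_nonempty.2 hRX.2).trans_le (h X hRX.1 hXG hX)
  obtain ⟨heK, heG, heX⟩ : e ∈ K ∧ e ∉ G ∧ e ∉ X := by simpa using he
  have hGeK : insert e G ⊆ K := insert_subset heK hGK
  refine ⟨insert e G, ⟨ssubset_insert heG, ?_, hSafe hGeK hK⟩, hGeK, fun Z hXZ hZ hZs ↦ ?_⟩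
  · exact disjoint_insert_left.2 ⟨heX, hXG.symm⟩
  · obtain ⟨heZ, hZG⟩ := disjoint_insert_right.1 hZ
    have hgain : #(Z \ X) < #(Z \ R) := by
      rw [card_sdiff_of_subset hXZ, card_sdiff_of_subset (hRX.1.trans hXZ)]
      exact Nat.sub_lt_sub_left ((card_lt_card hRX).trans_le (card_le_card hXZ)) (card_lt_card hRX)
    have hspent : #(K \ (G ∪ Z)) = #(K \ (insert e G ∪ Z)) + 1 := by
      rw [insert_union, sdiff_insert, card_erase_add_one (by simp [heK, heG, heZ])]
    have := h Z (hRX.1.trans hXZ) hZG hZs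
    omega

end AvoidanceGame

/-! ### Triangle-free edge sets -/

/-- The avoidance condition of Sim: no three edges of `s` form a triangle. -/
def TriangleFree (s : Finset Edge6) : Prop :=
  ∀ a b c : Fin 6, ∀ hab : a ≠ b, ∀ hac : a ≠ c, ∀ hbc : b ≠ c,
    ¬(mkEdge6 a b hab ∈ s ∧ mkEdge6 a c hac ∈ s ∧ mkEdge6 b c hbc ∈ s)

theorem antitone_triangleFree : Antitone TriangleFree :=
  fun _ _ hst ht a b c hab hac hbc h ↦ ht a b c hab hac hbc ⟨hst h.1, hst h.2.1, hst h.2.2⟩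

theorem exists_eq_mkEdge6 (e : Edge6) : ∃ a b, ∃ h : a ≠ b, e = mkEdge6 a b h := by
  obtain ⟨⟨a, b⟩, h⟩ := e
  exact ⟨a, b, by simpa using h, rfl⟩

/-- The permutation of the edges of `K_6` induced by a permutation of its vertices. -/
def edgePerm (σ : Equiv.Perm (Fin 6)) : Equiv.Perm Edge6 where
  toFun e := ⟨e.1.map σ, (Sym2.isDiag_map σ.injective).not.2 e.2⟩
  invFun e := ⟨e.1.map σ.symm, (Sym2.isDiag_map σ.symm.injective).not.2 e.2⟩
  left_inv e := Subtype.ext <| by simp [Sym2.map_map]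
  right_inv e := Subtype.ext <| by simp [Sym2.map_map]

theorem TriangleFree.of_edgePerm {σ : Equiv.Perm (Fin 6)} {s : Finset Edge6}
    (h : TriangleFree ((edgePerm σ).finsetCongr s)) : TriangleFree s :=
  fun a b c hab hac hbc ⟨h₁, h₂, h₃⟩ ↦
    h (σ a) (σ b) (σ c) (σ.injective.ne hab) (σ.injective.ne hac) (σ.injective.ne hbc)
      ⟨mem_map_of_mem _ h₁, mem_map_of_mem _ h₂, mem_map_of_mem _ h₃⟩

theorem triangleFree_edgePerm_iff (σ : Equiv.Perm (Fin 6)) (s : Finset Edge6) :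
    TriangleFree ((edgePerm σ).finsetCongr s) ↔ TriangleFree s := by
  refine ⟨.of_edgePerm, fun h ↦ .of_edgePerm (σ := σ.symm) ?_⟩
  rwa [show edgePerm σ.symm = (edgePerm σ).symm from rfl, ← Equiv.finsetCongr_symm,
    Equiv.symm_apply_apply]

/-- The edges of `K_6`, listed in the order in which Red's moves are enumerated. -/
def edges : List Edge6 :=
  [0—1, 0—2, 0—3, 0—4, 0—5, 1—2, 1—3, 1—4, 1—5, 2—3, 2—4, 2—5, 3—4, 3—5, 4—5]

theorem mem_edges : ∀ e, e ∈ edges := by decide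

theorem nodup_edges : edges.Nodup := by decide

/-- The edges between `A` and its complement: a complete bipartite subgraph of `K_6`. -/
def cut (A : List (Fin 6)) : List Edge6 :=
  edges.filter fun e ↦
    Sym2.lift ⟨fun a b ↦ (A.contains a).xor (A.contains b), fun _ _ ↦ Bool.xor_comm _ _⟩ e.1

theorem mkEdge6_mem_cut {A : List (Fin 6)} {a b : Fin 6} {h : a ≠ b} :
    mkEdge6 a b h ∈ cut A ↔ A.contains a ≠ A.contains b := by
  simp only [cut, mkEdge6, List.mem_filter, mem_edges, true_and, Sym2.lift_mk, bne_iff_ne]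

theorem triangleFree_cut (A : List (Fin 6)) : TriangleFree (cut A).toFinset := by
  intro a b c hab hac hbc
  simp only [List.mem_toFinset, mkEdge6_mem_cut]
  cases A.contains a <;> cases A.contains b <;> cases A.contains c <;> decide

/-! ### Adjacency matrices as bit masks -/

/-- The adjacency matrix of the graph with the single edge `e`, the entry in row `a` and
column `b` being bit `6 * a + b`. -/
def edgeMask (e : Edge6) : ℕ :=
  Sym2.lift ⟨fun a b ↦ 2 ^ (6 * a.val + b.val) ||| 2 ^ (6 * b.val + a.val),
    fun _ _ ↦ Nat.lor_comm _ _⟩ e.1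

/-- The adjacency matrix of the graph with edge set `s`, as a bit mask. -/
def encode (s : Finset Edge6) : ℕ := s.fold (· ||| ·) 0 edgeMask

/-- `encode` for lists, in a form that the kernel evaluates quickly. -/
def mask (l : List Edge6) : ℕ := l.foldr (fun e m ↦ edgeMask e ||| m) 0

/-- Whether `e` is an edge of the graph with mask `m`. -/
def hasEdge (m : ℕ) (e : Edge6) : Bool := m &&& edgeMask e != 0

/-- Whether the ends of `e` have a common neighbour in the graph with mask `m`. -/
def closesTriangle (m : ℕ) (e : Edge6) : Bool :=
  Sym2.lift ⟨fun a b ↦ (m >>> (6 * a.val) &&& m >>> (6 * b.val)) % 2 ^ 6 != 0,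
    fun _ _ ↦ by simp only [Nat.land_comm]⟩ e.1

theorem encode_empty : encode ∅ = 0 := rfl

theorem encode_insert (e : Edge6) (s : Finset Edge6) :
    encode (insert e s) = edgeMask e ||| encode s :=
  fold_insert_idem

theorem mask_eq_encode (l : List Edge6) : mask l = encode l.toFinset := by
  induction l with
  | nil => rfl
  | cons e l ih => rw [List.toFinset_cons, encode_insert, ← ih]; rfl

theorem hasEdge_edgeMask : ∀ e f, hasEdge (edgeMask e) f = decide (f = e) := by
  decide +kernel

theorem hasEdge_lor (m n : ℕ) (e : Edge6) :
    hasEdge (m ||| n) e = (hasEdge m e || hasEdge n e) := by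
  rw [Bool.eq_iff_iff]
  simp [hasEdge, Nat.and_or_distrib_right, imp_iff_not_or]

theorem hasEdge_encode (s : Finset Edge6) (e : Edge6) : hasEdge (encode s) e = decide (e ∈ s) := by
  induction s using Finset.induction_on with
  | empty => simp [hasEdge, encode_empty]
  | insert f s _ ih => simp [encode_insert, hasEdge_lor, hasEdge_edgeMask, ih]

theorem encode_injective : Function.Injective encode := fun s t h ↦ by
  ext e
  simpa only [hasEdge_encode, decide_eq_decide] using congrArg (hasEdge · e) h

theorem testBit_edgeMask : ∀ e, ∀ a b : Fin 6,
    (edgeMask e).testBit (6 * a + b) = decide (∃ h : a ≠ b, mkEdge6 a b h = e) := by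
  decide +kernel

theorem testBit_encode (s : Finset Edge6) (a b : Fin 6) :
    (encode s).testBit (6 * a + b) = true ↔ ∃ h : a ≠ b, mkEdge6 a b h ∈ s := by
  induction s using Finset.induction_on with
  | empty => simp [encode_empty]
  | insert e s _ ih =>
    simp only [encode_insert, Nat.testBit_or, Bool.or_eq_true, testBit_edgeMask, decide_eq_true_eq,
      ih, mem_insert, exists_or]

theorem closesTriangle_encode {s : Finset Edge6} {a b : Fin 6} {hab : a ≠ b} :
    closesTriangle (encode s) (mkEdge6 a b hab) = true ↔
      ∃ c, ∃ hac : a ≠ c, ∃ hbc : b ≠ c, mkEdge6 a c hac ∈ s ∧ mkEdge6 b c hbc ∈ s := by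
  have hrow (m : ℕ) : m % 2 ^ 6 ≠ 0 ↔ ∃ c : Fin 6, m.testBit c = true := by
    refine ⟨fun h ↦ ?_, fun ⟨c, hc⟩ h ↦ ?_⟩
    · obtain ⟨i, hi⟩ := Nat.exists_testBit_of_ne_zero h
      rw [Nat.testBit_mod_two_pow, Bool.and_eq_true, decide_eq_true_eq] at hi
      exact ⟨⟨i, hi.1⟩, hi.2⟩
    · simpa [-Nat.reducePow, hc] using congrArg (Nat.testBit · c) h
  have hbit : closesTriangle (encode s) (mkEdge6 a b hab) = true ↔
      ∃ c : Fin 6, (encode s).testBit (6 * a + c) = true ∧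
        (encode s).testBit (6 * b + c) = true := by
    simp only [closesTriangle, mkEdge6, Sym2.lift_mk, bne_iff_ne, hrow, Nat.testBit_and,
      Nat.testBit_shiftRight, Bool.and_eq_true]
  simp only [hbit, testBit_encode]
  exact exists_congr fun c ↦ ⟨fun ⟨⟨h₁, h₂⟩, h₃, h₄⟩ ↦ ⟨h₁, h₃, h₂, h₄⟩,
    fun ⟨h₁, h₃, h₂, h₄⟩ ↦ ⟨⟨h₁, h₂⟩, h₃, h₄⟩⟩

theorem encode_union_toFinset (s : Finset Edge6) (l : List Edge6) :
    encode (s ∪ l.toFinset) = encode s ||| mask l := by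
  induction l with
  | nil => simp [mask]
  | cons e l ih =>
    rw [List.toFinset_cons, union_insert, encode_insert, ih, ← Nat.lor_assoc,
      Nat.lor_comm _ (encode s), Nat.lor_assoc]
    rfl

theorem TriangleFree.closesTriangle_eq_false {s X : Finset Edge6} {e : Edge6}
    (hX : TriangleFree X) (hs : s ⊆ X) (he : e ∈ X) : closesTriangle (encode s) e = false := by
  obtain ⟨a, b, hab, rfl⟩ := exists_eq_mkEdge6 e
  refine eq_false_of_ne_true fun hc ↦ ?_
  obtain ⟨c, hac, hbc, h₁, h₂⟩ := closesTriangle_encode.1 hc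
  exact hX a b c hab hac hbc ⟨he, hs h₁, hs h₂⟩

theorem triangleFree_of_closesTriangle_eq_false {s : Finset Edge6}
    (h : ∀ e ∈ s, closesTriangle (encode s) e = false) : TriangleFree s :=
  fun _ _ c _ hac hbc ⟨h₁, h₂, h₃⟩ ↦
    ne_true_of_eq_false (h _ h₁) (closesTriangle_encode.2 ⟨c, hac, hbc, h₂, h₃⟩)

/-! ### The tempo count -/

/-- The uncolored edges when Red and Green own the graphs with masks `R` and `G`. -/
def freeEdges (R G : ℕ) : List Edge6 := edges.filter fun e ↦ !hasEdge R e && !hasEdge G e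

theorem mem_freeEdges {R G : Finset Edge6} {e : Edge6} :
    e ∈ freeEdges (encode R) (encode G) ↔ e ∉ R ∧ e ∉ G := by
  simp [freeEdges, mem_edges, hasEdge_encode]

theorem nodup_freeEdges (R G : ℕ) : (freeEdges R G).Nodup := nodup_edges.filter _

theorem subset_union_freeEdges {R G Z : Finset Edge6} (h : Disjoint Z G) :
    Z ⊆ R ∪ (freeEdges (encode R) (encode G)).toFinset := fun e he ↦ by
  rw [mem_union, List.mem_toFinset, mem_freeEdges]
  exact or_iff_not_imp_left.2 fun heR ↦ ⟨heR, disjoint_left.1 h he⟩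

/-- Whether `P` holds at every triangle-free mask obtained by adding edges from `l` to `m`. -/
def forallExt (P : ℕ → Bool) : List Edge6 → ℕ → Bool
  | [], m => P m
  | e :: l, m =>
    (closesTriangle m e || forallExt P l (edgeMask e ||| m)) && forallExt P l m

theorem apply_of_forallExt {P : ℕ → Bool} {l : List Edge6} {s X : Finset Edge6}
    (h : forallExt P l (encode s) = true) (hs : s ⊆ X) (hl : X ⊆ s ∪ l.toFinset)
    (hX : TriangleFree X) : P (encode X) = true := by
  induction l generalizing s with
  | nil =>
    obtain rfl : s = X := hs.antisymm (by simpa using hl)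
    exact h
  | cons e l ih =>
    simp only [forallExt, Bool.and_eq_true, Bool.or_eq_true, ← encode_insert] at h
    rw [List.toFinset_cons, union_insert, ← insert_union] at hl
    by_cases he : e ∈ X
    · have hopen := hX.closesTriangle_eq_false hs he
      exact ih (h.1.resolve_left (ne_true_of_eq_false hopen)) (insert_subset he hs) hl
    · exact ih h.2 hs <| by rwa [insert_union, subset_insert_iff_of_notMem he] at hl

/-- The loss in Green's tempo count when Red takes `e` while her reserve lies in the graph with
mask `K`: one move gained by Red, and one edge lost from the reserve if `e` belongs to it. -/
def cost (K : ℕ) (e : Edge6) : ℕ := bif hasEdge K e then 2 else 1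

theorem sum_cost_encode (K s : Finset Edge6) : ∑ e ∈ s, cost (encode K) e = #s + #(s ∩ K) := by
  have hcost (e : Edge6) : cost (encode K) e = 1 + if e ∈ K then 1 else 0 := by
    by_cases he : e ∈ K <;> simp [cost, hasEdge_encode, he]
  simp only [hcost, sum_add_distrib, card_eq_sum_ones, ← sum_filter, filter_mem_eq_inter]

/-- Whether no triangle-free extension of `m` by edges from `l` costs Green more than `n`. -/
def costBounded (K : ℕ) : List Edge6 → ℕ → ℕ → Bool
  | [], _, _ => true
  | e :: l, m, n => 2 * l.length + 2 ≤ n || (costBounded K l m n &&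
      (closesTriangle m e ||
        cost K e ≤ n && costBounded K l (edgeMask e ||| m) (n - cost K e)))

theorem sum_cost_le_of_costBounded {K n : ℕ} {l : List Edge6} {R Z : Finset Edge6}
    (h : costBounded K l (encode R) n = true) (hR : R ⊆ Z) (hl : Z ⊆ R ∪ l.toFinset)
    (hZ : TriangleFree Z) : ∑ e ∈ Z \ R, cost K e ≤ n := by
  induction l generalizing R n with
  | nil => simp [sdiff_eq_empty_iff_subset.2 (show Z ⊆ R by simpa using hl)]
  | cons e l ih =>
    simp only [costBounded, Bool.or_eq_true, Bool.and_eq_true, decide_eq_true_eq,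
      ← encode_insert] at h
    obtain hn | ⟨hskip, htake⟩ := h
    · have hcard : #(Z \ R) ≤ l.length + 1 :=
        (card_le_card (sdiff_le_iff.2 hl)).trans (List.toFinset_card_le _)
      have hcost : ∑ e ∈ Z \ R, cost K e ≤ #(Z \ R) * 2 :=
        sum_le_card_nsmul _ _ _ fun e _ ↦ by unfold cost; cases hasEdge K e <;> simp
      omega
    · rw [List.toFinset_cons, union_insert, ← insert_union] at hl
      by_cases he : e ∈ Z \ R
      · obtain ⟨heZ, -⟩ := mem_sdiff.1 he
        obtain ⟨hle, hrest⟩ :=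
          htake.resolve_left (ne_true_of_eq_false (hZ.closesTriangle_eq_false hR heZ))
        have hsum := ih hrest (insert_subset heZ hR) hl
        rw [← add_sum_erase _ _ he, ← sdiff_insert]
        exact (Nat.le_sub_iff_add_le' hle).1 hsum
      · refine ih hskip hR ?_
        rw [mem_sdiff, not_and_not_right] at he
        by_cases heZ : e ∈ Z
        · rwa [insert_eq_of_mem (he heZ)] at hl
        · rwa [insert_union, subset_insert_iff_of_notMem heZ] at hl

/-- Whether Green, confined to the graph with mask `K`, has a free edge of `K` for every turn
Red can still reach. -/
def outlasts (K R G : ℕ) : Bool :=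
  costBounded K (freeEdges R G) R ((freeEdges R G).countP (hasEdge K))

theorem countP_freeEdges (K R G : Finset Edge6) :
    (freeEdges (encode R) (encode G)).countP (hasEdge (encode K)) = #(K \ (G ∪ R)) := by
  rw [List.countP_eq_length_filter,
    ← List.toFinset_card_of_nodup ((nodup_freeEdges _ _).filter _)]
  congr 1
  ext e
  simp only [List.mem_toFinset, List.mem_filter, mem_freeEdges, hasEdge_encode, decide_eq_true_eq,
    mem_sdiff, mem_union]
  tauto

theorem greenHolds_of_outlasts {K R G : Finset Edge6} (hK : TriangleFree K) (hGK : G ⊆ K)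
    (h : outlasts (encode K) (encode R) (encode G) = true) : GreenHolds TriangleFree R G := by
  refine .of_forall_card_le antitone_triangleFree hK hGK fun Z hRZ hZG hZ ↦ ?_
  have hcost : #(Z \ R) + #((Z \ R) ∩ K) ≤ #(K \ (G ∪ R)) := by
    rw [← sum_cost_encode, ← countP_freeEdges]
    exact sum_cost_le_of_costBounded h hRZ (subset_union_freeEdges hZG) hZ
  have hreserve : K \ (G ∪ R) ⊆ K \ (G ∪ Z) ∪ (Z \ R) ∩ K := fun e ↦ by
    simp only [mem_sdiff, mem_union, mem_inter]
    tauto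
  have := (card_le_card hreserve).trans (card_union_le _ _)
  omega

/-! ### Replies to a move of Red -/

/-- Representatives of the ten partitions of the vertices into two triples. -/
def sides : List (List (Fin 6)) :=
  [[0, 1, 2], [0, 1, 3], [0, 1, 4], [0, 1, 5], [0, 2, 3], [0, 2, 4], [0, 2, 5], [0, 3, 4],
    [0, 3, 5], [0, 4, 5]]

/-- The masks of the cuts between two triples that contain the graph with mask `G`. -/
def cuts (G : ℕ) : List ℕ :=
  (sides.map fun A ↦ mask (cut A)).filter fun K ↦ edges.all fun e ↦ !hasEdge G e || hasEdge K e

theorem exists_of_mem_cuts {K : ℕ} {G : Finset Edge6} (h : K ∈ cuts (encode G)) :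
    ∃ C : Finset Edge6, K = encode C ∧ TriangleFree C ∧ G ⊆ C := by
  obtain ⟨hK, hG⟩ := List.mem_filter.1 h
  obtain ⟨A, -, rfl⟩ := List.mem_map.1 hK
  refine ⟨(cut A).toFinset, mask_eq_encode _, triangleFree_cut A, fun e he ↦ ?_⟩
  have := List.all_eq_true.1 hG e (mem_edges e)
  simpa [mask_eq_encode, hasEdge_encode, he] using this

/-- The part of a cut `K` that Green takes at once: among the uncolored edges `F`, those which
Red, owning `X`, could still take, or any single one if there are none. -/
def seizure (K X : ℕ) (F : List Edge6) : List Edge6 :=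
  match F.filter fun e ↦ hasEdge K e && !closesTriangle X e with
  | [] => (F.filter (hasEdge K)).take 1
  | e :: l => e :: l

theorem mem_of_mem_seizure {K X : ℕ} {F : List Edge6} {e : Edge6} (h : e ∈ seizure K X F) :
    e ∈ F ∧ hasEdge K e = true := by
  unfold seizure at h
  split at h
  · exact List.mem_filter.1 (List.mem_of_mem_take h)
  case _ heq =>
    rw [← heq, List.mem_filter, Bool.and_eq_true] at h
    exact ⟨h.1, h.2.1⟩

/-- Whether Green, owning `G` against `X`, may color the edges in `s`. -/
def canTake (X G : ℕ) (s : List Edge6) : Bool :=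
  !s.isEmpty && (s.all fun e ↦ !hasEdge X e && !hasEdge G e) &&
    edges.all fun e ↦ !(hasEdge (G ||| mask s) e && closesTriangle (G ||| mask s) e)

theorem isMove_of_canTake {X G : Finset Edge6} {s : List Edge6} (hXG : Disjoint X G)
    (h : canTake (encode X) (encode G) s = true) : IsMove TriangleFree G X (G ∪ s.toFinset) := by
  simp only [canTake, ← encode_union_toFinset, hasEdge_encode, Bool.and_eq_true, List.all_eq_true,
    Bool.not_eq_true', decide_eq_false_iff_not, List.isEmpty_eq_false_iff] at h
  obtain ⟨⟨hne, hfree⟩, hopen⟩ := h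
  refine isMove_union_toFinset hne hfree hXG.symm
    (triangleFree_of_closesTriangle_eq_false fun e he ↦ ?_)
  simpa [he] using hopen e (mem_edges e)

/-- Green's opening book: the triples `(X, G, s)` mean that Green, owning `G` against Red's `X`,
colors the edges in `s`. Its entries were found by a search over positions, up to permutations of
the vertices, in which no cut wins the tempo count. -/
def openingBook : List (List Edge6 × List Edge6 × List Edge6) :=
  [
   ([0—1], [], [4—5]),
   ([0—1, 0—2], [], [4—5]),
   ([0—1, 0—2], [4—5], [3—5]),
   ([0—1, 0—2, 0—3], [4—5], [3—5]),
   ([0—1, 0—2, 0—3], [3—5, 4—5], [2—4]),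
   ([0—1, 0—4], [4—5], [1—3]),
   ([0—1, 0—3, 0—4], [1—3, 4—5], [2—4]),
   ([0—1, 0—4, 0—5], [4—5], [3—5]),
   ([0—1, 0—4, 0—5], [1—3, 4—5], [2—5]),
   ([0—3, 1—2], [], [4—5]),
   ([0—3, 0—4, 1—2], [], [4—5]),
   ([0—3, 0—4, 1—2], [4—5], [2—4]),
   ([0—4, 1—2, 1—3], [], [3—5]),
   ([0—3, 1—2, 1—4], [4—5], [3—4]),
   ([0—1, 0—2, 1—5], [3—5, 4—5], [2—5]),
   ([0—1, 2—3], [4—5], [1—3]),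
   ([0—1, 0—3, 2—3], [1—3, 4—5], [1—2]),
   ([0—1, 0—4, 2—3], [4—5], [3—4]),
   ([0—1, 0—4, 2—3], [1—3, 4—5], [3—4]),
   ([0—1, 1—2, 2—3], [1—3, 4—5], [0—3]),
   ([0—1, 0—3, 1—2, 2—3], [1—3, 4—5], [3—5]),
   ([0—1, 1—4, 2—3], [1—3, 4—5], [3—4]),
   ([0—5, 1—4, 2—3], [], [0—1, 0—4, 1—5, 4—5]),
   ([0—1, 2—4], [4—5], [2—5]),
   ([0—1, 0—3, 2—4], [4—5], [2—5]),
   ([0—1, 0—3, 2—4], [2—5, 4—5], [3—5]),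
   ([0—1, 0—5, 2—4], [4—5], [3—5]),
   ([0—1, 0—5, 2—4], [2—5, 4—5], [3—5]),
   ([0—1, 2—3, 2—4], [4—5], [1—4]),
   ([0—1, 2—3, 2—4], [1—3, 4—5], [1—4]),
   ([0—1, 2—3, 2—4], [2—5, 4—5], [3—5]),
   ([0—1, 0—4, 2—5], [1—3, 4—5], [2—4]),
   ([0—1, 0—2, 1—5, 2—5], [3—5, 4—5], [2—4]),
   ([0—1, 2—4, 2—5], [4—5], [0—3, 1—3]),
   ([0—1, 0—3, 2—4, 2—5], [4—5], [3—5]),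
   ([0—1, 0—2, 3—4], [4—5], [3—5]),
   ([0—1, 0—2, 3—4], [3—5, 4—5], [2—5]),
   ([0—1, 2—3, 3—4], [1—3, 4—5], [1—4]),
   ([0—1, 2—4, 3—4], [4—5], [2—5, 3—5]),
   ([0—1, 2—5, 3—4], [4—5], [2—3, 2—4, 3—5]),
   ([0—1, 2—4, 2—5, 3—4], [4—5], [3—5]),
   ([0—1, 2—4, 2—5, 3—4], [0—3, 1—3, 4—5], [3—5]),
   ([0—1, 0—4, 3—5], [1—3, 4—5], [3—4]),
   ([0—1, 2—4, 3—5], [2—5, 4—5], [2—3, 3—4]),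
   ([0—1, 2—3, 2—4, 3—5], [2—5, 4—5], [3—4]),
   ([0—1, 0—2, 3—4, 3—5], [4—5], [2—5]),
   ([0—1, 2—4, 2—5, 3—4, 3—5], [4—5], [2—3]),
   ([0—1, 2—4, 2—5, 3—4, 3—5], [0—3, 1—3, 4—5], [1—2])]

/-- The positions, with Red to move, in which the book leaves the game. -/
def IsBookPosition (R G : Finset Edge6) : Prop :=
  ∃ t ∈ openingBook, R = t.1.toFinset ∧ G = (t.2.1 ++ t.2.2).toFinset

/-- Whether Green, owning `G` against `X`, can win the tempo count in a cut after seizing part of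
it, or finds a legal reply in the book. -/
def winningReply (X G : ℕ) : Bool :=
  ((cuts G).any fun K ↦ !(seizure K X (freeEdges X G)).isEmpty &&
    outlasts K X (G ||| mask (seizure K X (freeEdges X G)))) ||
  (openingBook.filter fun t ↦ G == mask t.2.1).any fun t ↦ X == mask t.1 && canTake X G t.2.2

theorem exists_reply_of_winningReply {X G : Finset Edge6} (hXG : Disjoint X G)
    (h : winningReply (encode X) (encode G) = true) :
    ∃ Y, IsMove TriangleFree G X Y ∧ (GreenHolds TriangleFree X Y ∨ IsBookPosition X Y) := by
  simp only [winningReply, Bool.or_eq_true, List.any_eq_true, Bool.and_eq_true, List.mem_filter,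
    beq_iff_eq, mask_eq_encode, encode_injective.eq_iff] at h
  obtain ⟨K, hK, hne, hout⟩ | ⟨t, ⟨ht, hG⟩, hX, htake⟩ := h
  · obtain ⟨C, rfl, hC, hGC⟩ := exists_of_mem_cuts hK
    rw [Bool.not_eq_true', List.isEmpty_eq_false_iff] at hne
    set s := seizure (encode C) (encode X) (freeEdges (encode X) (encode G))
    have hfree : ∀ e ∈ s, (e ∉ X ∧ e ∉ G) ∧ e ∈ C := fun e he ↦ by
      simpa [mem_freeEdges, hasEdge_encode] using mem_of_mem_seizure he
    have hYC : G ∪ s.toFinset ⊆ C :=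
      union_subset hGC fun e he ↦ (hfree e (List.mem_toFinset.1 he)).2
    refine ⟨G ∪ s.toFinset, ?_, .inl (greenHolds_of_outlasts hC hYC ?_)⟩
    · exact isMove_union_toFinset hne (fun e he ↦ (hfree e he).1) hXG.symm
        (antitone_triangleFree hYC hC)
    · rwa [encode_union_toFinset, mask_eq_encode]
  · exact ⟨_, isMove_of_canTake hXG htake, .inr ⟨t, ht, hX, by rw [hG, List.toFinset_append]⟩⟩

/-! ### Vertex symmetries -/

theorem encode_insert_eq_xor {e : Edge6} {s : Finset Edge6} (he : e ∉ s) :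
    encode (insert e s) = edgeMask e ^^^ encode s := by
  have hand : encode s &&& edgeMask e = 0 := by
    simpa [hasEdge, he] using hasEdge_encode s e
  rw [encode_insert]
  refine Nat.eq_of_testBit_eq fun i ↦ ?_
  have := congrArg (Nat.testBit · i) hand
  simp only [Nat.testBit_and, Nat.testBit_or, Nat.testBit_xor, Nat.zero_testBit] at this ⊢
  grind

/-- Exchanges the bits of `m` at the positions selected by `c <<< i` with those selected by
`c <<< j`, provided that the two selections are disjoint. -/
def deltaSwap (c i j m : ℕ) : ℕ :=
  m ^^^ (((m >>> i ^^^ m >>> j) &&& c) <<< i) ^^^ (((m >>> i ^^^ m >>> j) &&& c) <<< j)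

theorem deltaSwap_xor (c i j m n : ℕ) :
    deltaSwap c i j (m ^^^ n) = deltaSwap c i j m ^^^ deltaSwap c i j n := by
  simp only [deltaSwap, Nat.shiftRight_xor_distrib, Nat.shiftLeft_xor_distrib,
    Nat.and_xor_distrib_right]
  ac_rfl

/-- Exchanges columns `a` and `b`, then rows `a` and `b`, of the adjacency matrix `m`. The
constants select a row, `63 = 2 ^ 6 - 1`, and a column, `1090785345 = ∑ i < 6, 2 ^ (6 * i)`. -/
def exchange (a b : Fin 6) (m : ℕ) : ℕ :=
  deltaSwap 63 (6 * a) (6 * b) (deltaSwap 1090785345 a b m)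

theorem exchange_edgeMask : ∀ a b e,
    exchange a b (edgeMask e) = edgeMask (edgePerm (Equiv.swap a b) e) := by
  decide +kernel

theorem exchange_encode (a b : Fin 6) (s : Finset Edge6) :
    exchange a b (encode s) = encode ((edgePerm (Equiv.swap a b)).finsetCongr s) := by
  induction s using Finset.induction_on with
  | empty => simp [encode_empty, exchange, deltaSwap]
  | insert e s he ih =>
    have hperm : (edgePerm (Equiv.swap a b)).finsetCongr (insert e s) =
        insert (edgePerm (Equiv.swap a b) e) ((edgePerm (Equiv.swap a b)).finsetCongr s) :=
      map_insert ..
    rw [hperm, encode_insert_eq_xor he, encode_insert_eq_xor (by simpa using he), ← ih,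
      ← exchange_edgeMask]
    simp only [exchange, deltaSwap_xor]

/-- Whether exchanging two vertices fixes `R` and `G` and makes `X` smaller. -/
def reducible (R G X : ℕ) : Bool :=
  ((List.finRange 6 ×ˢ List.finRange 6).filter fun p ↦
      p.1 < p.2 && exchange p.1 p.2 R == R && exchange p.1 p.2 G == G).any
    fun p ↦ exchange p.1 p.2 X < X

theorem exists_edgePerm_of_reducible {R G X : Finset Edge6}
    (h : reducible (encode R) (encode G) (encode X) = true) :
    ∃ σ, (edgePerm σ).finsetCongr R = R ∧ (edgePerm σ).finsetCongr G = G ∧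
      encode ((edgePerm σ).finsetCongr X) < encode X := by
  simp only [reducible, List.any_eq_true, List.mem_filter, Bool.and_eq_true, beq_iff_eq,
    decide_eq_true_eq, exchange_encode, encode_injective.eq_iff] at h
  obtain ⟨p, ⟨-, ⟨-, hR⟩, hG⟩, hX⟩ := h
  exact ⟨_, hR, hG, hX⟩

/-! ### The verified strategy -/

/-- Whether every move of Red leads to a position that is symmetric to a smaller one or in which
Green has a reply; `X = R` is exempt because staying put is not a move. -/
def closedAt (R G : ℕ) : Bool :=
  forallExt (fun X ↦ X == R || reducible R G X || winningReply X G) (freeEdges R G) R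

theorem greenHolds_of_closedAt {R G : Finset Edge6}
    (hbook : ∀ X Y, R ⊂ X → IsBookPosition X Y → GreenHolds TriangleFree X Y)
    (h : closedAt (encode R) (encode G) = true) : GreenHolds TriangleFree R G := by
  refine .of_forall_survives fun X hX ↦ ?_
  induction hn : encode X using Nat.strong_induction_on generalizing X with
  | h n ih =>
    obtain ⟨hRX, hXG, hsafe⟩ := hX
    have hcheck := apply_of_forallExt h hRX.1 (subset_union_freeEdges hXG) hsafe
    simp only [Bool.or_eq_true, beq_iff_eq, encode_injective.eq_iff, hRX.ne', false_or] at hcheck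
    obtain hred | hreply := hcheck
    · obtain ⟨σ, hR, hG, hlt⟩ := exists_edgePerm_of_reducible hred
      have hmove := IsMove.map (triangleFree_edgePerm_iff σ) ⟨hRX, hXG, hsafe⟩
      rw [hR, hG] at hmove
      refine GreenSurvives.of_map (triangleFree_edgePerm_iff σ) ?_
      rw [hG]
      exact ih _ (hn ▸ hlt) _ hmove rfl
    · obtain ⟨Y, hY, hwin⟩ := exists_reply_of_winningReply hXG hreply
      exact ⟨Y, hY, hwin.elim id (hbook X Y hRX)⟩

theorem closedAt_start : closedAt 0 0 = true := by decide +kernel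

theorem closedAt_of_mem_openingBook :
    ∀ t ∈ openingBook, closedAt (mask t.1) (mask (t.2.1 ++ t.2.2)) = true := by
  decide +kernel

theorem IsBookPosition.greenHolds {R G : Finset Edge6} (h : IsBookPosition R G) :
    GreenHolds TriangleFree R G := by
  induction R using WellFoundedGT.induction generalizing G with
  | ind R ih =>
    obtain ⟨t, ht, rfl, rfl⟩ := h
    refine greenHolds_of_closedAt (fun X Y hX hXY ↦ ih X hX hXY) ?_
    simpa only [mask_eq_encode] using closedAt_of_mem_openingBook t ht

theorem greenHolds_start : GreenHolds TriangleFree ∅ ∅ :=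
  greenHolds_of_closedAt (fun _ _ _ hXY ↦ hXY.greenHolds) closedAt_start

/-! ### Positions of Sim⁺ -/

/-- The edges of color `c` in the position `p`. -/
def colored (p : Pos) (c : Bool) : Finset Edge6 := univ.filter fun e ↦ p e = some c

theorem mem_colored {p : Pos} {c : Bool} {e : Edge6} : e ∈ colored p c ↔ p e = some c := by
  simp [colored]

theorem colored_startPos (c : Bool) : colored startPos c = ∅ := by
  simp [colored, startPos]

theorem colored_colorSet_self (p : Pos) (c : Bool) (s : Finset Edge6) :
    colored (colorSet p c s) c = colored p c ∪ s := by
  ext e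
  by_cases he : e ∈ s <;> simp [mem_colored, colorSet, he]

theorem colored_colorSet_not {p : Pos} {s : Finset Edge6} (hs : ∀ e ∈ s, p e = none) (c : Bool) :
    colored (colorSet p c s) (!c) = colored p (!c) := by
  ext e
  by_cases he : e ∈ s <;> simp [mem_colored, colorSet, he, hs]

theorem hasMonoTri_iff (p : Pos) (c : Bool) : HasMonoTri p c ↔ ¬TriangleFree (colored p c) := by
  simp only [HasMonoTri, TriangleFree, mem_colored, not_forall, not_not]

theorem eq_none_iff (p : Pos) (c : Bool) (e : Edge6) :
    p e = none ↔ e ∉ colored p c ∧ e ∉ colored p (!c) := by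
  rw [mem_colored, mem_colored]
  rcases p e with _ | d
  · simp
  · cases c <;> cases d <;> simp

theorem disjoint_colored_not (p : Pos) (c : Bool) : Disjoint (colored p c) (colored p (!c)) :=
  disjoint_left.2 fun e he he' ↦ by
    simpa using (mem_colored.1 he).symm.trans (mem_colored.1 he')

theorem legal_iff_isMove (p : Pos) (c : Bool) (s : Finset Edge6) :
    Legal p c s ↔ Disjoint (colored p c) s ∧
      IsMove TriangleFree (colored p c) (colored p (!c)) (colored p c ∪ s) := by
  have hfree : (∀ e ∈ s, p e = none) ↔ Disjoint (colored p c) s ∧ Disjoint s (colored p (!c)) := by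
    simp only [eq_none_iff p c, imp_and, forall_and, disjoint_left,
      disjoint_comm (a := colored p c)]
  rw [Legal, hasMonoTri_iff, not_not, colored_colorSet_self, hfree, and_assoc, and_left_comm]
  exact and_congr_right fun h ↦ (isMove_union_iff (disjoint_colored_not p c) h).symm

/-- Green can win from `p` if player `c` is to move. -/
def Favorable (p : Pos) (c : Bool) : Prop :=
  if c then GreenHolds TriangleFree (colored p true) (colored p false)
  else GreenSurvives TriangleFree (colored p true) (colored p false)

theorem favorable_startPos : Favorable startPos true := by
  simpa only [Favorable, reduceIte, colored_startPos] using greenHolds_start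

theorem Favorable.colorSet_red {p : Pos} {s : Finset Edge6} (h : Favorable p true)
    (hs : Legal p true s) : Favorable (colorSet p true s) false := by
  have hgreen : colored (colorSet p true s) false = colored p false :=
    colored_colorSet_not hs.2.1 true
  rw [Favorable, if_neg Bool.false_ne_true, hgreen, colored_colorSet_self]
  exact GreenHolds.survives h ((legal_iff_isMove p true s).1 hs).2

theorem Favorable.exists_reply {p : Pos} (h : Favorable p false) :
    ∃ s, Legal p false s ∧ Favorable (colorSet p false s) true := by
  obtain ⟨Y, hY, hXY⟩ := h
  have hunion : colored p false ∪ (Y \ colored p false) = Y := union_sdiff_of_subset hY.1.1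
  have hlegal : Legal p false (Y \ colored p false) :=
    (legal_iff_isMove ..).2 ⟨disjoint_sdiff, hunion.symm ▸ hY⟩
  refine ⟨_, hlegal, ?_⟩
  have hred : colored (colorSet p false (Y \ colored p false)) true = colored p true :=
    colored_colorSet_not hlegal.2.1 false
  rwa [Favorable, if_pos rfl, hred, colored_colorSet_self, hunion]

theorem posFrom_concat (p : Pos) (k : ℕ) (ms : List (Finset Edge6)) (s : Finset Edge6) :
    posFrom p k (ms ++ [s]) = colorSet (posFrom p k ms) (playerAt (k + ms.length)) s := by
  induction ms generalizing p k with
  | nil => rfl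
  | cons t ms ih =>
    simp only [List.cons_append, posFrom, ih, List.length_cons, Nat.add_assoc, Nat.add_comm 1]

theorem posAfter_concat (ms : List (Finset Edge6)) (s : Finset Edge6) :
    posAfter (ms ++ [s]) = colorSet (posAfter ms) (playerAt ms.length) s := by
  rw [posAfter, posFrom_concat, Nat.zero_add, posAfter]

theorem playerAt_succ (k : ℕ) : playerAt (k + 1) = !playerAt k := by
  rw [playerAt, playerAt, ← decide_not, decide_eq_decide]
  omega

theorem followsGreen_concat {σ : Pos → Finset Edge6} {ms : List (Finset Edge6)}
    {s : Finset Edge6} (h : FollowsGreen σ (ms ++ [s])) :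
    FollowsGreen σ ms ∧ Legal (posAfter ms) (playerAt ms.length) s ∧
      (playerAt ms.length = false → s = σ (posAfter ms)) := by
  refine ⟨fun i hi ↦ ?_, ?_⟩
  · have := h i (by simp; omega)
    simpa [List.take_append_of_le_length hi.le, List.getElem_append_left hi] using this
  · simpa using h ms.length (by simp)

theorem favorable_of_followsGreen {σ : Pos → Finset Edge6}
    (hσ : ∀ p, Favorable p false → Favorable (colorSet p false (σ p)) true)
    {ms : List (Finset Edge6)} (h : FollowsGreen σ ms) :
    Favorable (posAfter ms) (playerAt ms.length) := by
  induction ms using List.reverseRecOn with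
  | nil => exact favorable_startPos
  | append_singleton ms s ih =>
    obtain ⟨hms, hlegal, hs⟩ := followsGreen_concat h
    have hfav := ih hms
    rw [posAfter_concat, List.length_append, List.length_singleton, playerAt_succ]
    cases hturn : playerAt ms.length with
    | true =>
      rw [hturn] at hfav hlegal
      exact hfav.colorSet_red hlegal
    | false =>
      rw [hturn] at hfav
      rw [hs hturn]
      exact hσ _ hfav

end SimPlus

open SimPlus in
/-- The second player, Green, has a winning strategy in Sim⁺ (the avoidance⁺ variant of
Sim where each move colors a nonempty set of uncolored edges): a strategy `σ` such that
in every play in which Green follows it, whenever it is Green's turn the move prescribed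
by `σ` is legal — hence Green is never unable to move, and since plays are finite, every
play following `σ` ends with Red being the player unable to make a legal move. -/
theorem green_wins_sim_plus :
    ∃ σ : Pos → Finset Edge6, ∀ ms : List (Finset Edge6), FollowsGreen σ ms →
      playerAt ms.length = false →
        Legal (posAfter ms) false (σ (posAfter ms)) := by
  choose! σ hlegal hσ using fun p ↦ Favorable.exists_reply (p := p)
  refine ⟨σ, fun ms hplay hturn ↦ hlegal _ ?_⟩
  simpa only [hturn] using favorable_of_followsGreen hσ hplay
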